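/- The Lefschetz decomposition identity θ0i∧θ2i = (1/4)·(θ1j∧θ1j + θ1k∧θ1k − θ1i∧θ1i − θs∧θs) holds, and the identities obtained by cyclically permuting (i,j,k) hold as well. -/

import Mathlib

/-!
Each identity is linear in products of four basis 1-forms, so it suffices to compare the two sides
in the monomial basis of the exterior algebra. The relations `e8 i * e8 i = 0` and
`e8 i * e8 j = -(e8 j * e8 i)` bring every monomial into increasing order of indices. The
coefficients of the combination of squares are then four times those of the
product on the left.
-/

noncomputable section

open ExteriorAlgebra

/-- Basis 1-forms of the dual of `ℝ^8`, modelled as generators of the exterior algebra of an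
8-dimensional real vector space. -/
def e8 (i : Fin 8) : ExteriorAlgebra ℝ (Fin 8 → ℝ) :=
  ExteriorAlgebra.ι ℝ (Pi.single i 1)

def dx1 : ExteriorAlgebra ℝ (Fin 8 → ℝ) := e8 0
def dx2 : ExteriorAlgebra ℝ (Fin 8 → ℝ) := e8 1
def dx3 : ExteriorAlgebra ℝ (Fin 8 → ℝ) := e8 2
def dx4 : ExteriorAlgebra ℝ (Fin 8 → ℝ) := e8 3
def dy1 : ExteriorAlgebra ℝ (Fin 8 → ℝ) := e8 4
def dy2 : ExteriorAlgebra ℝ (Fin 8 → ℝ) := e8 5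
def dy3 : ExteriorAlgebra ℝ (Fin 8 → ℝ) := e8 6
def dy4 : ExteriorAlgebra ℝ (Fin 8 → ℝ) := e8 7

def θ0i : ExteriorAlgebra ℝ (Fin 8 → ℝ) := dy1 * dy2 - dy3 * dy4
def θ0j : ExteriorAlgebra ℝ (Fin 8 → ℝ) := dy1 * dy3 + dy2 * dy4
def θ0k : ExteriorAlgebra ℝ (Fin 8 → ℝ) := dy1 * dy4 - dy2 * dy3
def θ1i : ExteriorAlgebra ℝ (Fin 8 → ℝ) := dy1 * dx2 - dy2 * dx1 + dy4 * dx3 - dy3 * dx4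
def θ1j : ExteriorAlgebra ℝ (Fin 8 → ℝ) := dy1 * dx3 + dy2 * dx4 - dy3 * dx1 - dy4 * dx2
def θ1k : ExteriorAlgebra ℝ (Fin 8 → ℝ) := dy1 * dx4 - dy4 * dx1 + dy3 * dx2 - dy2 * dx3
def θ2i : ExteriorAlgebra ℝ (Fin 8 → ℝ) := dx1 * dx2 - dx3 * dx4
def θ2j : ExteriorAlgebra ℝ (Fin 8 → ℝ) := dx1 * dx3 + dx2 * dx4
def θ2k : ExteriorAlgebra ℝ (Fin 8 → ℝ) := dx1 * dx4 - dx2 * dx3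
def θs : ExteriorAlgebra ℝ (Fin 8 → ℝ) := -(dy1 * dx1 + dy2 * dx2 + dy3 * dx3 + dy4 * dx4)

lemma e8_mul_self (i : Fin 8) : e8 i * e8 i = 0 :=
  ExteriorAlgebra.ι_sq_zero _

lemma e8_mul_self_mul (i : Fin 8) (z : ExteriorAlgebra ℝ (Fin 8 → ℝ)) :
    e8 i * (e8 i * z) = 0 := by
  rw [← mul_assoc, e8_mul_self, zero_mul]

/-- Anticommutation of 1-forms. The hypothesis orients the equation as a terminating rewrite rule
that sorts monomials by index. -/
lemma e8_mul_swap {i j : Fin 8} (_h : i < j) : e8 j * e8 i = -(e8 i * e8 j) :=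
  eq_neg_of_add_eq_zero_left (ExteriorAlgebra.ι_add_mul_swap _ _)

/-- `e8_mul_swap` at the front of a longer right-associated monomial. -/
lemma e8_mul_swap_mul {i j : Fin 8} (h : i < j) (z : ExteriorAlgebra ℝ (Fin 8 → ℝ)) :
    e8 j * (e8 i * z) = -(e8 i * (e8 j * z)) := by
  rw [← mul_assoc, e8_mul_swap h, neg_mul, mul_assoc]

theorem lefschetz_decomposition_theta0_theta2 :
    θ0i * θ2i = (1 / 4 : ℝ) • (θ1j * θ1j + θ1k * θ1k - θ1i * θ1i - θs * θs) ∧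
    θ0j * θ2j = (1 / 4 : ℝ) • (θ1k * θ1k + θ1i * θ1i - θ1j * θ1j - θs * θs) ∧
    θ0k * θ2k = (1 / 4 : ℝ) • (θ1i * θ1i + θ1j * θ1j - θ1k * θ1k - θs * θs) := by
  refine ⟨?_, ?_, ?_⟩ <;>
  · simp only [θ0i, θ0j, θ0k, θ1i, θ1j, θ1k, θ2i, θ2j, θ2k, θs,
      dx1, dx2, dx3, dx4, dy1, dy2, dy3, dy4,
      mul_add, add_mul, mul_sub, sub_mul, mul_neg, neg_mul, mul_assoc]
    -- Sorting every monomial by index leaves an identity between linear combinations.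
    simp (disch := decide) only [e8_mul_swap, e8_mul_swap_mul, e8_mul_self_mul,
      mul_neg, mul_zero]
    module

end
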